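/- For every integer N ≥ 1 and every real q with 0 < q < 1, the A_{N−1} lattice theta function at the shifted Weyl vector has the product form: ∑ over vectors k ∈ ℤ^N with k_1 + … + k_N = 0 of q^((1/2)·∑_{i=1}^N (k_i + (N+1−2i)/(2N))²) equals q^((N²−1)/(24N)) · ∏_{k=1}^∞ (1 − q^k)^N / ∏_{k=1}^∞ (1 − q^(k/N)). -/

import Mathlib

open scoped BigOperators

/-!
Expand `∏ᵢ ∑ₘ q ^ (m ^ 2 / 2 + ρ̂ᵢ m)`, a product of `N` one-dimensional theta series, as a sum over
all of `ℤᴺ`, and slice it by `∑ kᵢ = m`. The map `(k₁, …, k_N) ↦ (k₂, …, k_N, k₁ + 1)` carries slice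
`m` onto slice `m + 1` and multiplies every term by `q ^ ((2m + 1) / (2N))`, so slice `m` is
`q ^ (m ^ 2 / (2N))` times slice `0`, and the product of the theta series is the lattice sum over
`∑ kᵢ = 0` times the theta series `∑ₘ q ^ (m ^ 2 / (2N))`. In the Jacobi triple products, the odd
factors `1 + q ^ ((2j + 1) / (2N))` of that last series are distributed over the `N` theta series
according to `j` modulo `N`, so they cancel and only the Euler products remain.

Fractional powers are avoided by working with integer powers of `s = q ^ (1 / (2N))`.
-/

namespace WeylTheta

open Filter Finset Topology

section Algebra

variable {R : Type*}

/-- The Gaussian binomial coefficient `[n choose k]_q`, defined by the `q`-Pascal recursion so that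
it makes sense at every `q`, including roots of unity. -/
def gaussBinom [CommSemiring R] (q : R) : ℕ → ℕ → R
  | _, 0 => 1
  | 0, _ + 1 => 0
  | n + 1, k + 1 => gaussBinom q n k + q ^ (k + 1) * gaussBinom q n (k + 1)

/-- The `q`-Pochhammer symbol `(a; q)ₙ`. -/
def qPochhammer [CommRing R] (a q : R) (n : ℕ) : R := ∏ j ∈ range n, (1 - a * q ^ j)

section CommSemiring

variable [CommSemiring R] (q : R)

@[simp] lemma gaussBinom_zero_right (n : ℕ) : gaussBinom q n 0 = 1 := by
  cases n <;> rfl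

lemma gaussBinom_succ_succ (n k : ℕ) :
    gaussBinom q (n + 1) (k + 1) = gaussBinom q n k + q ^ (k + 1) * gaussBinom q n (k + 1) := rfl

lemma gaussBinom_eq_zero_of_lt {n k : ℕ} (h : n < k) : gaussBinom q n k = 0 := by
  induction n generalizing k with
  | zero => obtain ⟨k, rfl⟩ := Nat.exists_eq_succ_of_ne_zero h.ne'; rfl
  | succ n ih =>
    obtain ⟨k, rfl⟩ := Nat.exists_eq_succ_of_ne_zero h.ne_bot
    rw [gaussBinom_succ_succ, ih (by lia), ih (by lia), mul_zero, add_zero]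

lemma gaussBinom_self (n : ℕ) : gaussBinom q n n = 1 := by
  induction n with
  | zero => rfl
  | succ n ih => rw [gaussBinom_succ_succ, ih, gaussBinom_eq_zero_of_lt q n.lt_succ_self,
      mul_zero, add_zero]

theorem prod_one_add_mul_pow_eq_sum_gaussBinom (x : R) (n : ℕ) :
    ∏ j ∈ range n, (1 + x * q ^ j) =
      ∑ k ∈ range (n + 1), gaussBinom q n k * q ^ k.choose 2 * x ^ k := by
  induction n generalizing x with
  | zero => simp
  | succ n ih =>
    set f : ℕ → R := fun k ↦ gaussBinom q n k * q ^ k.choose 2 * (x * q) ^ k with hf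
    have hcoeff (k : ℕ) : gaussBinom q (n + 1) (k + 1) * q ^ (k + 1).choose 2 * x ^ (k + 1) =
        f (k + 1) + x * f k := by
      have hchoose : (k + 1).choose 2 = k + k.choose 2 := by
        rw [Nat.choose_succ_succ', Nat.choose_one_right]
      simp only [hf, gaussBinom_succ_succ, hchoose]
      ring
    have htop : f (n + 1) = 0 := by simp [hf, gaussBinom_eq_zero_of_lt q n.lt_succ_self]
    have hshift : ∑ k ∈ range (n + 1), f (k + 1) + 1 = ∑ k ∈ range (n + 1), f k := by
      rw [← add_zero (∑ k ∈ range (n + 1), f k), ← htop, ← sum_range_succ, sum_range_succ' f]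
      simp [hf]
    calc ∏ j ∈ range (n + 1), (1 + x * q ^ j)
        = (∏ j ∈ range n, (1 + x * q * q ^ j)) * (1 + x) := by
          rw [prod_range_succ', pow_zero, mul_one]
          simp only [pow_succ', mul_assoc]
      _ = ∑ k ∈ range (n + 1), f (k + 1) + 1 + x * ∑ k ∈ range (n + 1), f k := by
          rw [ih, hshift]; ring
      _ = _ := by
          rw [sum_range_succ' _ (n + 1), sum_congr rfl fun k _ ↦ hcoeff k, sum_add_distrib, mul_sum]
          simp only [gaussBinom_zero_right, Nat.choose_zero_succ, pow_zero, mul_one]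
          ring

end CommSemiring

lemma qPochhammer_succ [CommRing R] (a q : R) (n : ℕ) :
    qPochhammer a q (n + 1) = qPochhammer a q n * (1 - a * q ^ n) :=
  prod_range_succ _ _

lemma qPochhammer_add [CommRing R] (a q : R) (m n : ℕ) :
    qPochhammer a q (m + n) = qPochhammer a q m * qPochhammer (a * q ^ m) q n := by
  simp only [qPochhammer, prod_range_add, pow_add, mul_assoc]

theorem qPochhammer_neg_eq_sum_gaussBinom [CommRing R] (x q : R) (n : ℕ) :
    qPochhammer (-x) q n = ∑ k ∈ range (n + 1), gaussBinom q n k * q ^ k.choose 2 * x ^ k := by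
  simp only [← prod_one_add_mul_pow_eq_sum_gaussBinom, qPochhammer, neg_mul, sub_neg_eq_add]

theorem gaussBinom_mul_qPochhammer [CommRing R] (q : R) (a b : ℕ) :
    gaussBinom q (a + b) a * (qPochhammer q q a * qPochhammer q q b) = qPochhammer q q (a + b) := by
  induction h : a + b generalizing a b with
  | zero =>
    obtain ⟨rfl, rfl⟩ : a = 0 ∧ b = 0 := by lia
    simp [qPochhammer]
  | succ n ih =>
    rcases a with _ | a
    · obtain rfl : b = n + 1 := by lia
      simp [qPochhammer]
    rcases b with _ | b
    · obtain rfl : a = n := by lia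
      simp [qPochhammer, gaussBinom_self]
    have hleft := ih a (b + 1) (by lia)
    have hright := ih (a + 1) b (by lia)
    obtain rfl : n = a + b + 1 := by lia
    rw [gaussBinom_succ_succ, qPochhammer_succ q q (a + b + 1), ← hleft, qPochhammer_succ q q b,
      qPochhammer_succ q q a]
    rw [qPochhammer_succ q q a, ← hleft, qPochhammer_succ q q b] at hright
    linear_combination (q ^ (a + 1) * (1 - q * q ^ b)) * hright

lemma qPochhammer_reflect [Field R] {a q : R} (ha : a ≠ 0) (hq : q ≠ 0) (n : ℕ) :
    qPochhammer a q n =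
      (-a) ^ n * q ^ n.choose 2 * qPochhammer (a⁻¹ * q ^ (1 - n : ℤ)) q n := by
  have hfactor {j : ℕ} (hj : j ∈ range n) :
      1 - a * q ^ j = -a * q ^ j * (1 - a⁻¹ * q ^ (1 - n : ℤ) * q ^ (n - 1 - j)) := by
    have hpow : q ^ j * (q ^ (1 - n : ℤ) * q ^ (n - 1 - j)) = 1 := by
      simp only [← zpow_natCast, ← zpow_add₀ hq]
      rw [show (j : ℤ) + (1 - n + (n - 1 - j : ℕ)) = 0 by have := mem_range.mp hj; lia, zpow_zero]
    linear_combination -hpow - (q ^ j * (q ^ (1 - n : ℤ) * q ^ (n - 1 - j))) * mul_inv_cancel₀ ha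
  rw [qPochhammer, prod_congr rfl fun _ ↦ hfactor, prod_mul_distrib, prod_mul_distrib,
    prod_const, card_range, prod_pow_eq_pow_sum, sum_range_id, ← Nat.choose_two_right,
    prod_range_reflect (fun j ↦ 1 - a⁻¹ * q ^ (1 - n : ℤ) * q ^ j), qPochhammer]

end Algebra

section JacobiTripleProduct

variable {K : Type*}

/-- The coefficient `[2M choose M + m]_q` of `q ^ (m ^ 2 / 2) * z ^ m` in the finite Jacobi triple
product, extended by zero to all integers `m`. -/
def centralGaussBinom [CommSemiring K] (q : K) (M : ℕ) (m : ℤ) : K :=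
  if -(M : ℤ) ≤ m then gaussBinom q (2 * M) (M + m).toNat else 0

lemma centralGaussBinom_eq_gaussBinom [CommSemiring K] (q : K) {M : ℕ} {m : ℤ} (h : m.natAbs ≤ M) :
    centralGaussBinom q M m =
      gaussBinom q ((M + m).toNat + (M - m).toNat) (M + m).toNat := by
  rw [centralGaussBinom, if_pos (by lia), show 2 * M = (M + m).toNat + (M - m).toNat by lia]

lemma centralGaussBinom_eq_zero [CommSemiring K] (q : K) {M : ℕ} {m : ℤ}
    (h : m ∉ Icc (-M : ℤ) M) : centralGaussBinom q M m = 0 := by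
  rw [mem_Icc, not_and] at h
  rw [centralGaussBinom]
  split_ifs with hm
  · exact gaussBinom_eq_zero_of_lt q (by have := h hm; lia)
  · rfl

lemma sq_pow_choose_two [Field K] {s : K} (hs : s ≠ 0) (n : ℕ) :
    (s ^ 2) ^ n.choose 2 = s ^ (n * (n - 1) : ℤ) := by
  induction n with
  | zero => simp
  | succ n ih =>
    rw [Nat.choose_succ_succ', Nat.choose_one_right, pow_add, ih, ← pow_mul, ← zpow_natCast,
      ← zpow_add₀ hs]
    congr 1
    push_cast
    ring

lemma jacobi_monomial_eq [Field K] {s z : K} (hs : s ≠ 0) (hz : z ≠ 0) (M k : ℕ) :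
    (s * z⁻¹) ^ M * (s ^ 2) ^ M.choose 2 *
        ((s ^ 2) ^ k.choose 2 * (s⁻¹ * z * (s ^ 2) ^ (1 - M : ℤ)) ^ k) =
      s ^ ((k - M : ℤ) ^ 2) * z ^ (k - M : ℤ) := by
  have hs_exp : ((k : ℤ) - M) ^ 2 = M + M * (M - 1) + k * (k - 1) + -k + 2 * (1 - M) * k := by ring
  rw [sq_pow_choose_two hs, sq_pow_choose_two hs, hs_exp, sub_eq_add_neg (k : ℤ) M]
  simp only [mul_pow, zpow_add₀ hs, zpow_add₀ hz, zpow_neg, inv_pow, zpow_natCast, zpow_mul,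
    zpow_ofNat]
  ring

theorem qPochhammer_mul_qPochhammer_eq_sum [Field K] {s z : K} (hs : s ≠ 0) (hz : z ≠ 0) (M : ℕ) :
    qPochhammer (-(s * z)) (s ^ 2) M * qPochhammer (-(s * z⁻¹)) (s ^ 2) M =
      ∑ m ∈ Icc (-M : ℤ) M, centralGaussBinom (s ^ 2) M m * (s ^ (m ^ 2) * z ^ m) := by
  have hq : s ^ 2 ≠ 0 := pow_ne_zero 2 hs
  set x : K := s⁻¹ * z * (s ^ 2) ^ (1 - M : ℤ) with hx
  set c : K := (s * z⁻¹) ^ M * (s ^ 2) ^ M.choose 2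
  have hreflect : qPochhammer (-(s * z⁻¹)) (s ^ 2) M = c * qPochhammer (-x) (s ^ 2) M := by
    rw [qPochhammer_reflect (neg_ne_zero.mpr (mul_ne_zero hs (inv_ne_zero hz))) hq, neg_neg,
      inv_neg, mul_inv, inv_inv, neg_mul]
  have hshift : -x * (s ^ 2) ^ M = -(s * z) := by
    rw [hx, neg_mul, mul_assoc, ← zpow_natCast (s ^ 2), ← zpow_add₀ hq, sub_add_cancel, zpow_one]
    field_simp
  calc _ = c * qPochhammer (-x) (s ^ 2) (M + M) := by
        rw [qPochhammer_add, hshift, hreflect]; ring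
    _ = ∑ k ∈ range (2 * M + 1), gaussBinom (s ^ 2) (2 * M) k *
          (s ^ ((k - M : ℤ) ^ 2) * z ^ (k - M : ℤ)) := by
        rw [← two_mul, qPochhammer_neg_eq_sum_gaussBinom, mul_sum]
        refine sum_congr rfl fun k _ ↦ ?_
        rw [← jacobi_monomial_eq hs hz]
        ring
    _ = _ := by
        refine sum_bij' (fun k _ ↦ (k : ℤ) - M) (fun m _ ↦ (M + m).toNat) ?_ ?_ ?_ ?_ ?_ <;>
          simp only [mem_range, mem_Icc]
        iterate 4 lia
        intro k _
        rw [centralGaussBinom, if_pos (by lia), add_sub_cancel, Int.toNat_natCast]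

variable [NormedField K]

lemma norm_pow_lt_one {a : K} (ha : ‖a‖ < 1) {n : ℕ} (hn : n ≠ 0) : ‖a ^ n‖ < 1 := by
  rw [norm_pow]
  exact pow_lt_one₀ (norm_nonneg a) ha hn

lemma qPochhammer_self_ne_zero {q : K} (hq : ‖q‖ < 1) (n : ℕ) : qPochhammer q q n ≠ 0 := by
  refine prod_ne_zero_iff.mpr fun j _ ↦ sub_ne_zero.mpr fun h ↦ ?_
  have := norm_pow_lt_one hq j.succ_ne_zero
  rw [pow_succ', ← h, norm_one] at this
  exact this.false

lemma gaussBinom_add_eq_div {q : K} (hq : ‖q‖ < 1) (a b : ℕ) :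
    gaussBinom q (a + b) a =
      qPochhammer q q (a + b) / (qPochhammer q q a * qPochhammer q q b) := by
  rw [← gaussBinom_mul_qPochhammer, mul_div_cancel_right₀ _
    (mul_ne_zero (qPochhammer_self_ne_zero hq a) (qPochhammer_self_ne_zero hq b))]

lemma summable_norm_zpow_sq_mul_zpow {s : K} (hs : ‖s‖ < 1) (z : K) :
    Summable fun m : ℤ ↦ ‖s ^ (m ^ 2) * z ^ m‖ := by
  have hnat (w : K) : Summable fun n : ℕ ↦ ‖(s ^ n * w) ^ n‖ := by
    have hsmall : ∀ᶠ n : ℕ in atTop, ‖s ^ n * w‖ ≤ 1 / 2 := by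
      have hlim := (tendsto_pow_atTop_nhds_zero_of_norm_lt_one hs).mul_const w
      rw [zero_mul] at hlim
      exact hlim.norm.eventually_le_const (by simp)
    refine .of_norm_bounded_eventually_nat (g := fun n ↦ (1 / 2 : ℝ) ^ n)
      summable_geometric_two ?_
    filter_upwards [hsmall] with n hn
    rw [norm_norm, norm_pow]
    exact pow_le_pow_left₀ (norm_nonneg _) hn n
  refine .of_nat_of_neg ((hnat z).congr fun n ↦ ?_) ((hnat z⁻¹).congr fun n ↦ ?_)
  · rw [mul_pow, ← pow_mul, ← sq, ← Nat.cast_pow, zpow_natCast, zpow_natCast]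
  · rw [mul_pow, ← pow_mul, ← sq, neg_sq, ← Nat.cast_pow, zpow_natCast, zpow_neg, zpow_natCast,
      inv_pow]

/-- The infinite `q`-Pochhammer symbol `(a; q)_∞`, meaningful for `‖q‖ < 1`. -/
noncomputable def qPochhammerInf (a q : K) : K := ∏' n : ℕ, (1 - a * q ^ n)

lemma summable_norm_neg_mul_pow (a : K) {q : K} (hq : ‖q‖ < 1) :
    Summable fun n : ℕ ↦ ‖-(a * q ^ n)‖ := by
  simp only [norm_neg, norm_mul]
  exact (summable_norm_geometric_of_norm_lt_one hq).mul_left _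

variable [CompleteSpace K]

lemma multipliable_one_sub_mul_pow (a : K) {q : K} (hq : ‖q‖ < 1) :
    Multipliable fun n : ℕ ↦ 1 - a * q ^ n := by
  simpa only [sub_eq_add_neg] using
    multipliable_one_add_of_summable (summable_norm_neg_mul_pow a hq)

lemma tendsto_qPochhammer (a : K) {q : K} (hq : ‖q‖ < 1) :
    Tendsto (qPochhammer a q) atTop (𝓝 (qPochhammerInf a q)) :=
  (multipliable_one_sub_mul_pow a hq).hasProd.tendsto_prod_nat

lemma qPochhammerInf_ne_zero {a q : K} (ha : ‖a‖ < 1) (hq : ‖q‖ < 1) :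
    qPochhammerInf a q ≠ 0 := by
  simp only [qPochhammerInf, sub_eq_add_neg]
  refine tprod_one_add_ne_zero_of_summable (fun n ↦ ?_) (summable_norm_neg_mul_pow a hq)
  rw [← sub_eq_add_neg, sub_ne_zero]
  intro h
  have := mul_lt_one_of_nonneg_of_lt_one_left (norm_nonneg a) ha
    (pow_le_one₀ (norm_nonneg q) hq.le (n := n))
  rw [← norm_pow, ← norm_mul, ← h, norm_one] at this
  exact this.false

lemma exists_norm_gaussBinom_add_le {q : K} (hq : ‖q‖ < 1) :
    ∃ C, ∀ a b, ‖gaussBinom q (a + b) a‖ ≤ C := by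
  have hlim := tendsto_qPochhammer q hq
  obtain ⟨A, hA⟩ := (Metric.isBounded_range_of_tendsto _ hlim).exists_norm_le
  obtain ⟨B, hB⟩ := (Metric.isBounded_range_of_tendsto _
    (hlim.inv₀ (qPochhammerInf_ne_zero hq hq))).exists_norm_le
  rw [Set.forall_mem_range] at hA hB
  refine ⟨A * (B * B), fun a b ↦ ?_⟩
  rw [gaussBinom_add_eq_div hq, div_eq_mul_inv, mul_inv, norm_mul, norm_mul]
  gcongr
  exacts [(norm_nonneg _).trans (hA 0), hA _, (norm_nonneg _).trans (hB 0), hB a, hB b]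

lemma tendsto_gaussBinom_add {ι : Type*} {l : Filter ι} {a b : ι → ℕ} {q : K} (hq : ‖q‖ < 1)
    (ha : Tendsto a l atTop) (hb : Tendsto b l atTop) :
    Tendsto (fun i ↦ gaussBinom q (a i + b i) (a i)) l (𝓝 (qPochhammerInf q q)⁻¹) := by
  have hlim := tendsto_qPochhammer q hq
  have hne := qPochhammerInf_ne_zero hq hq
  have hquot := (hlim.comp (ha.atTop_add_atTop hb)).div ((hlim.comp ha).mul (hlim.comp hb))
    (mul_ne_zero hne hne)
  rw [div_mul_cancel_left₀ hne] at hquot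
  exact hquot.congr fun i ↦ (gaussBinom_add_eq_div hq _ _).symm

lemma tendsto_centralGaussBinom {q : K} (hq : ‖q‖ < 1) (m : ℤ) :
    Tendsto (fun M ↦ centralGaussBinom q M m) atTop (𝓝 (qPochhammerInf q q)⁻¹) := by
  have hadd : Tendsto (fun M : ℕ ↦ (M + m).toNat) atTop atTop :=
    tendsto_atTop_atTop.mpr fun b ↦ ⟨b + m.natAbs, by lia⟩
  have hsub : Tendsto (fun M : ℕ ↦ (M - m).toNat) atTop atTop :=
    tendsto_atTop_atTop.mpr fun b ↦ ⟨b + m.natAbs, by lia⟩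
  refine (tendsto_gaussBinom_add hq hadd hsub).congr' ?_
  filter_upwards [eventually_ge_atTop m.natAbs] with M hM
  exact (centralGaussBinom_eq_gaussBinom q hM).symm

lemma exists_norm_centralGaussBinom_le {q : K} (hq : ‖q‖ < 1) :
    ∃ C, ∀ M m, ‖centralGaussBinom q M m‖ ≤ C := by
  obtain ⟨C, hC⟩ := exists_norm_gaussBinom_add_le hq
  refine ⟨C, fun M m ↦ ?_⟩
  by_cases hm : m ∈ Icc (-M : ℤ) M
  · rw [centralGaussBinom_eq_gaussBinom q (by rw [mem_Icc] at hm; lia)]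
    exact hC _ _
  · rw [centralGaussBinom_eq_zero q hm, norm_zero]
    exact (norm_nonneg _).trans (hC 0 0)

theorem jacobi_triple_product {s z : K} (hs : s ≠ 0) (hs' : ‖s‖ < 1) (hz : z ≠ 0) :
    ∑' m : ℤ, s ^ (m ^ 2) * z ^ m =
      qPochhammerInf (s ^ 2) (s ^ 2) *
        (qPochhammerInf (-(s * z)) (s ^ 2) * qPochhammerInf (-(s * z⁻¹)) (s ^ 2)) := by
  have hq : ‖s ^ 2‖ < 1 := norm_pow_lt_one hs' two_ne_zero
  obtain ⟨C, hC⟩ := exists_norm_centralGaussBinom_le hq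
  have hprod := (tendsto_qPochhammer (-(s * z)) hq).mul (tendsto_qPochhammer (-(s * z⁻¹)) hq)
  have hsum : Tendsto
      (fun M : ℕ ↦ ∑' m : ℤ, centralGaussBinom (s ^ 2) M m * (s ^ (m ^ 2) * z ^ m)) atTop
      (𝓝 (∑' m : ℤ, (qPochhammerInf (s ^ 2) (s ^ 2))⁻¹ * (s ^ (m ^ 2) * z ^ m))) := by
    refine tendsto_tsum_of_dominated_convergence ((summable_norm_zpow_sq_mul_zpow hs' z).mul_left C)
      (fun m ↦ (tendsto_centralGaussBinom hq m).mul_const _) (.of_forall fun M m ↦ ?_)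
    rw [norm_mul]
    gcongr
    exact hC M m
  have hfinite (M : ℕ) : ∑' m : ℤ, centralGaussBinom (s ^ 2) M m * (s ^ (m ^ 2) * z ^ m) =
      qPochhammer (-(s * z)) (s ^ 2) M * qPochhammer (-(s * z⁻¹)) (s ^ 2) M := by
    rw [qPochhammer_mul_qPochhammer_eq_sum hs hz]
    exact tsum_eq_sum fun m hm ↦ by rw [centralGaussBinom_eq_zero _ hm, zero_mul]
  simp only [hfinite, tsum_mul_left] at hsum
  rw [tendsto_nhds_unique hprod hsum, mul_inv_cancel_left₀ (qPochhammerInf_ne_zero hq hq)]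

end JacobiTripleProduct

section Multisection

lemma prod_tprod_mod_eq_tprod {α : Type*} [CommMonoid α] [TopologicalSpace α] [ContinuousMul α]
    [T3Space α] (N : ℕ) [NeZero N] {f : ℕ → α} (hf : Multipliable f)
    (hfiber : ∀ i : Fin N, Multipliable fun n ↦ f (n * N + i)) :
    ∏ i : Fin N, ∏' n, f (n * N + i) = ∏' n, f n := by
  let e : Fin N × ℕ ≃ ℕ := (Equiv.prodComm (Fin N) ℕ).trans (Nat.divModEquiv N).symm
  have hsplit := Multipliable.tprod_prod' (f := fun p ↦ f (e p)) (e.multipliable_iff.mpr hf) hfiber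
  rw [← e.tprod_eq, hsplit, tprod_fintype]
  rfl

lemma prod_qPochhammerInf_mul_pow {K : Type*} [NormedField K] [CompleteSpace K] (a : K) {q : K}
    (hq : ‖q‖ < 1) (N : ℕ) [NeZero N] :
    ∏ i : Fin N, qPochhammerInf (a * q ^ (i : ℕ)) (q ^ N) = qPochhammerInf a q := by
  have hqN : ‖q ^ N‖ < 1 := norm_pow_lt_one hq (NeZero.ne N)
  have hterm (i : Fin N) (n : ℕ) :
      1 - a * q ^ (i : ℕ) * (q ^ N) ^ n = 1 - a * q ^ (n * N + i) := by ring
  simp only [qPochhammerInf, hterm]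
  refine prod_tprod_mod_eq_tprod N (multipliable_one_sub_mul_pow a hq) fun i ↦ ?_
  simpa only [hterm] using multipliable_one_sub_mul_pow (a * q ^ (i : ℕ)) hqN

end Multisection

section ProductOfSums

variable {R : Type*} [NormedCommRing R] {n : ℕ} {β : Fin n → Type*} {f : ∀ i, β i → R}

lemma summable_norm_fin_prod (hf : ∀ i, Summable fun b ↦ ‖f i b‖) :
    Summable fun k : ∀ i, β i ↦ ‖∏ i, f i (k i)‖ := by
  induction n with
  | zero => exact .of_finite
  | succ n ih =>
    rw [← (Fin.consEquiv β).summable_iff]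
    refine ((hf 0).mul_norm (ih fun i ↦ hf i.succ)).congr fun p ↦ ?_
    simp [Fin.prod_univ_succ, Fin.consEquiv]

theorem prod_tsum_eq_tsum_pi [CompleteSpace R] (hf : ∀ i, Summable fun b ↦ ‖f i b‖) :
    ∏ i, ∑' b, f i b = ∑' k : ∀ i, β i, ∏ i, f i (k i) := by
  induction n with
  | zero => simp
  | succ n ih =>
    rw [Fin.prod_univ_succ, ih fun i ↦ hf i.succ, tsum_mul_tsum_of_summable_norm (hf 0)
      (summable_norm_fin_prod fun i ↦ hf i.succ), ← (Fin.consEquiv β).tsum_eq]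
    simp [Fin.prod_univ_succ, Fin.consEquiv]

end ProductOfSums

section Lattice

/-- The change `N (|k + ρ̂|² - |ρ̂|²)` of the energy `|·|² / 2` when the shifted Weyl vector
`ρ̂ᵢ = (N - 1 - 2i) / (2N)` is translated by `k`, scaled by `2N` to be an integer. -/
def weylEnergy {N : ℕ} (k : Fin N → ℤ) : ℤ := ∑ i, (N * k i ^ 2 + (N - 1 - 2 * i) * k i)

/-- The bijection `(k₀, …, kₙ) ↦ (k₁, …, kₙ, k₀ + 1)` of `ℤⁿ⁺¹`, which carries each hyperplane
`∑ kᵢ = m` onto the next one. -/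
def cyclicShift (n : ℕ) : (Fin (n + 1) → ℤ) ≃ (Fin (n + 1) → ℤ) where
  toFun k := Fin.snoc (α := fun _ ↦ ℤ) (Fin.tail k) (k 0 + 1)
  invFun k := Fin.cons (α := fun _ ↦ ℤ) (k (Fin.last n) - 1) (Fin.init k)
  left_inv k := by simp
  right_inv k := by simp

lemma sum_cyclicShift {n : ℕ} (k : Fin (n + 1) → ℤ) : ∑ i, cyclicShift n k i = ∑ i, k i + 1 := by
  rw [Fin.sum_univ_castSucc, Fin.sum_univ_succ k]
  simp only [cyclicShift, Equiv.coe_fn_mk, Fin.snoc_castSucc, Fin.snoc_last, Fin.tail]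
  ring

lemma weylEnergy_cyclicShift {n : ℕ} (k : Fin (n + 1) → ℤ) :
    weylEnergy (cyclicShift n k) = weylEnergy k + (2 * ∑ i, k i + 1) := by
  rw [weylEnergy, weylEnergy, Fin.sum_univ_castSucc, Fin.sum_univ_succ, Fin.sum_univ_succ k]
  simp only [cyclicShift, Equiv.coe_fn_mk, Fin.snoc_castSucc, Fin.snoc_last, Fin.tail,
    Fin.val_castSucc, Fin.val_succ, Fin.val_last, Fin.val_zero]
  have hstep (i : Fin n) : ((n + 1 : ℕ) : ℤ) * k i.succ ^ 2 + ((n + 1 : ℕ) - 1 - 2 * i) * k i.succ =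
      ((n + 1 : ℕ) * k i.succ ^ 2 + ((n + 1 : ℕ) - 1 - 2 * (i + 1 : ℕ)) * k i.succ) +
        2 * k i.succ := by
    push_cast; ring
  rw [sum_congr rfl fun i _ ↦ hstep i, sum_add_distrib, ← mul_sum]
  push_cast
  ring

variable {K : Type*} [NormedField K]

/-- The part of the theta series of `weylEnergy` supported on the hyperplane `∑ kᵢ = m`. -/
noncomputable def hyperplaneTheta (s : K) (N : ℕ) (m : ℤ) : K :=
  ∑' k : {k : Fin N → ℤ // ∑ i, k i = m}, s ^ weylEnergy k.1

lemma hyperplaneTheta_add_one {s : K} (hs : s ≠ 0) (n : ℕ) (m : ℤ) :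
    hyperplaneTheta s (n + 1) (m + 1) = s ^ (2 * m + 1) * hyperplaneTheta s (n + 1) m := by
  let e : {k : Fin (n + 1) → ℤ // ∑ i, k i = m} ≃ {k : Fin (n + 1) → ℤ // ∑ i, k i = m + 1} :=
    (cyclicShift n).subtypeEquiv fun k ↦ by rw [sum_cyclicShift, add_left_inj]
  rw [hyperplaneTheta, hyperplaneTheta, ← tsum_mul_left, ← e.tsum_eq]
  refine tsum_congr fun k ↦ ?_
  rw [Equiv.subtypeEquiv_apply, weylEnergy_cyclicShift, k.2, zpow_add₀ hs, mul_comm]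

lemma hyperplaneTheta_eq {s : K} (hs : s ≠ 0) (n : ℕ) (m : ℤ) :
    hyperplaneTheta s (n + 1) m = s ^ (m ^ 2) * hyperplaneTheta s (n + 1) 0 := by
  induction m with
  | zero => simp
  | succ m ih =>
    rw [hyperplaneTheta_add_one hs, ih, ← mul_assoc, ← zpow_add₀ hs]
    ring_nf
  | pred m ih =>
    have hstep := hyperplaneTheta_add_one hs n (-m - 1)
    rw [sub_add_cancel, ih] at hstep
    refine mul_left_cancel₀ (zpow_ne_zero (2 * (-m - 1) + 1) hs) ?_
    rw [← hstep, ← mul_assoc, ← zpow_add₀ hs]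
    ring_nf

lemma zpow_weylEnergy {s : K} (hs : s ≠ 0) {N : ℕ} (k : Fin N → ℤ) :
    s ^ weylEnergy k = ∏ i, (s ^ N) ^ (k i ^ 2) * (s ^ (N - 1 - 2 * i : ℤ)) ^ k i := by
  have hsum (t : Finset (Fin N)) (f : Fin N → ℤ) : s ^ ∑ i ∈ t, f i = ∏ i ∈ t, s ^ f i := by
    induction t using Finset.cons_induction with
    | empty => simp
    | cons i t hi ih => rw [sum_cons, prod_cons, zpow_add₀ hs, ih]
  rw [weylEnergy, hsum]
  refine prod_congr rfl fun i _ ↦ ?_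
  rw [zpow_add₀ hs, zpow_mul, zpow_mul, zpow_natCast]

variable [CompleteSpace K]

lemma tsum_mul_hyperplaneTheta_zero {s : K} (hs : s ≠ 0) (hs' : ‖s‖ < 1) (n : ℕ) :
    (∑' m : ℤ, s ^ (m ^ 2)) * hyperplaneTheta s (n + 1) 0 =
      ∏ i : Fin (n + 1), ∑' m : ℤ,
        (s ^ (n + 1)) ^ (m ^ 2) * (s ^ ((n + 1 : ℕ) - 1 - 2 * i : ℤ)) ^ m := by
  have hpow : ‖s ^ (n + 1)‖ < 1 := norm_pow_lt_one hs' n.succ_ne_zero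
  have hfactor (i : Fin (n + 1)) := summable_norm_zpow_sq_mul_zpow hpow
    (s ^ ((n + 1 : ℕ) - 1 - 2 * i : ℤ))
  have hsummable : Summable fun k : Fin (n + 1) → ℤ ↦ s ^ weylEnergy k := by
    simpa only [zpow_weylEnergy hs] using (summable_norm_fin_prod hfactor).of_norm
  calc _ = ∑' m : ℤ, hyperplaneTheta s (n + 1) m := by
        rw [← tsum_mul_right, tsum_congr (hyperplaneTheta_eq hs n)]
    _ = ∑' k : Fin (n + 1) → ℤ, s ^ weylEnergy k :=
        (hsummable.hasSum.tsum_fiberwise fun k ↦ ∑ i, k i).tsum_eq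
    _ = _ := by rw [prod_tsum_eq_tsum_pi hfactor, tsum_congr (zpow_weylEnergy hs)]

lemma prod_tsum_eq_qPochhammerInf {s : K} (hs : s ≠ 0) (hs' : ‖s‖ < 1) (N : ℕ) [NeZero N] :
    ∏ i : Fin N, ∑' m : ℤ, (s ^ N) ^ (m ^ 2) * (s ^ (N - 1 - 2 * i : ℤ)) ^ m =
      qPochhammerInf ((s ^ 2) ^ N) ((s ^ 2) ^ N) ^ N *
        (qPochhammerInf (-s) (s ^ 2) * qPochhammerInf (-s) (s ^ 2)) := by
  have hq : ‖s ^ 2‖ < 1 := norm_pow_lt_one hs' two_ne_zero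
  have hpow : ‖s ^ N‖ < 1 := norm_pow_lt_one hs' (NeZero.ne N)
  have hplus (i : Fin N) :
      -(s ^ N * s ^ (N - 1 - 2 * i : ℤ)) = -s * (s ^ 2) ^ (Fin.revPerm i : ℕ) := by
    rw [neg_mul, ← pow_mul, ← pow_succ', ← zpow_natCast, ← zpow_natCast, ← zpow_add₀ hs]
    congr 2
    rw [Fin.revPerm_apply, Fin.val_rev, Nat.cast_succ, Nat.cast_mul, Nat.cast_sub i.isLt]
    push_cast
    ring
  have hminus (i : Fin N) :
      -(s ^ N * (s ^ (N - 1 - 2 * i : ℤ))⁻¹) = -s * (s ^ 2) ^ (i : ℕ) := by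
    rw [neg_mul, ← pow_mul, ← pow_succ', ← zpow_natCast, ← zpow_natCast, ← zpow_neg,
      ← zpow_add₀ hs]
    congr 2
    lia
  simp only [jacobi_triple_product (pow_ne_zero N hs) hpow (zpow_ne_zero _ hs), hplus, hminus,
    prod_mul_distrib, prod_const, card_univ, Fintype.card_fin]
  rw [Equiv.prod_comp Fin.revPerm fun i : Fin N ↦
      qPochhammerInf (-s * (s ^ 2) ^ (i : ℕ)) ((s ^ N) ^ 2),
    pow_right_comm s N 2, prod_qPochhammerInf_mul_pow (-s) hq]

theorem hyperplaneTheta_zero {s : K} (hs : s ≠ 0) (hs' : ‖s‖ < 1) (n : ℕ) :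
    hyperplaneTheta s (n + 1) 0 =
      qPochhammerInf ((s ^ 2) ^ (n + 1)) ((s ^ 2) ^ (n + 1)) ^ (n + 1) /
        qPochhammerInf (s ^ 2) (s ^ 2) := by
  have hq : ‖s ^ 2‖ < 1 := norm_pow_lt_one hs' two_ne_zero
  have hodd : qPochhammerInf (-s) (s ^ 2) ≠ 0 := qPochhammerInf_ne_zero (by rwa [norm_neg]) hq
  have hjacobi : ∑' m : ℤ, s ^ (m ^ 2) = qPochhammerInf (s ^ 2) (s ^ 2) *
      (qPochhammerInf (-s) (s ^ 2) * qPochhammerInf (-s) (s ^ 2)) := by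
    simpa only [one_zpow, mul_one, inv_one] using jacobi_triple_product hs hs' one_ne_zero
  have htotal := tsum_mul_hyperplaneTheta_zero hs hs' n
  rw [prod_tsum_eq_qPochhammerInf hs hs', hjacobi] at htotal
  rw [eq_div_iff (qPochhammerInf_ne_zero hq hq)]
  refine mul_right_cancel₀ (mul_ne_zero hodd hodd) ?_
  linear_combination htotal

end Lattice

section Character

lemma sum_weyl_sq (N : ℕ) : ∑ i : Fin N, ((N : ℝ) - 1 - 2 * i) ^ 2 = N * ((N : ℝ) ^ 2 - 1) / 3 := by
  have hsum (c : ℝ) (L : ℕ) : ∑ i ∈ range L, (c - 2 * i) ^ 2 =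
      L * c ^ 2 - 2 * c * (L * (L - 1)) + 2 * L * (L - 1) * (2 * L - 1) / 3 := by
    induction L with
    | zero => simp
    | succ L ih => rw [sum_range_succ, ih]; push_cast; ring
  rw [Fin.sum_univ_eq_sum_range fun i ↦ ((N : ℝ) - 1 - 2 * i) ^ 2, hsum]
  ring

lemma half_sum_add_weyl_sq {N : ℕ} (hN : N ≠ 0) (k : Fin N → ℤ) :
    (1 / 2 : ℝ) * ∑ i, ((k i : ℝ) + ((N : ℝ) - 1 - 2 * (i.val : ℝ)) / (2 * N)) ^ 2 =
      ((N : ℝ) ^ 2 - 1) / (24 * N) + weylEnergy k • (1 / (2 * N) : ℝ) := by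
  have hN' : (N : ℝ) ≠ 0 := Nat.cast_ne_zero.mpr hN
  have hterm (i : Fin N) : ((k i : ℝ) + ((N : ℝ) - 1 - 2 * (i.val : ℝ)) / (2 * N)) ^ 2 =
      (((N : ℝ) - 1 - 2 * i) ^ 2) * (1 / (4 * N ^ 2)) +
        (N * k i ^ 2 + (N - 1 - 2 * i) * k i) * (1 / N) := by
    field_simp
    ring
  rw [sum_congr rfl fun i _ ↦ hterm i, sum_add_distrib, ← sum_mul, ← sum_mul, sum_weyl_sq,
    weylEnergy, zsmul_eq_mul]
  push_cast
  field_simp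
  ring

variable {K : Type*} [NormedField K] (χ : AddChar ℝ K)

lemma tsum_addChar_half_sum_add_weyl_sq {N : ℕ} (hN : N ≠ 0) :
    ∑' k : {k : Fin N → ℤ // ∑ i, k i = 0}, χ ((1 / 2 : ℝ) *
        ∑ i : Fin N, ((k.1 i : ℝ) + ((N : ℝ) - 1 - 2 * (i.val : ℝ)) / (2 * N)) ^ 2) =
      χ (((N : ℝ) ^ 2 - 1) / (24 * N)) * hyperplaneTheta (χ (1 / (2 * N))) N 0 := by
  simp only [half_sum_add_weyl_sq hN, AddChar.map_add_eq_mul, AddChar.map_zsmul_eq_zpow,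
    tsum_mul_left, hyperplaneTheta]

lemma tprod_one_sub_pow_pow_eq_qPochhammerInf [CompleteSpace K] {q : K} (hq : ‖q‖ < 1) (N : ℕ) :
    ∏' k : ℕ, (1 - q ^ (k + 1)) ^ N = qPochhammerInf q q ^ N := by
  simp only [pow_succ', qPochhammerInf, (multipliable_one_sub_mul_pow q hq).tprod_pow]

lemma tprod_one_sub_addChar_eq_qPochhammerInf (N : ℕ) :
    ∏' k : ℕ, (1 - χ (((k : ℝ) + 1) / N)) =
      qPochhammerInf (χ (1 / (2 * N)) ^ 2) (χ (1 / (2 * N)) ^ 2) := by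
  refine tprod_congr fun k ↦ ?_
  rw [← pow_succ', ← pow_mul, ← AddChar.map_nsmul_eq_pow, nsmul_eq_mul]
  congr 2
  push_cast
  ring

/-- The character `x ↦ q ^ x` of the real line. -/
noncomputable def rpowAddChar {q : ℝ} (hq : 0 < q) : AddChar ℝ ℝ where
  toFun x := q ^ x
  map_zero_eq_one' := Real.rpow_zero q
  map_add_eq_mul' := Real.rpow_add hq

lemma rpowAddChar_apply {q : ℝ} (hq : 0 < q) (x : ℝ) : rpowAddChar hq x = q ^ x := rfl

end Character

end WeylTheta

open WeylTheta in
/-- The character `χ` provides the real powers `q ^ x = χ x` of `q = χ 1`; besides `0 < q < 1` this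
covers `q = exp (2πiτ)` with `χ x = exp (2πiτx)`, where real powers of `q` depend on `τ`. -/
theorem stmt1_general {K : Type*} [NormedField K] [CompleteSpace K] (N : ℕ) (hN : 1 ≤ N)
    (χ : AddChar ℝ K) (hχ : ‖χ 1‖ < 1) :
    (∑' k : {k : Fin N → ℤ // ∑ i, k i = 0},
        χ ((1 / 2 : ℝ) *
          ∑ i : Fin N, ((k.1 i : ℝ) + ((N : ℝ) - 1 - 2 * (i.val : ℝ)) / (2 * N)) ^ 2)) =
      χ (((N : ℝ) ^ 2 - 1) / (24 * N)) *
        (∏' k : ℕ, (1 - χ 1 ^ (k + 1)) ^ N) / ∏' k : ℕ, (1 - χ (((k : ℝ) + 1) / N)) := by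
  obtain ⟨n, rfl⟩ := Nat.exists_eq_add_of_le' hN
  set s : K := χ (1 / (2 * (n + 1 : ℕ))) with hs_def
  have hpow : s ^ (2 * (n + 1)) = χ 1 := by
    rw [hs_def, ← AddChar.map_nsmul_eq_pow, nsmul_eq_mul]
    congr 1
    push_cast
    field_simp
  have hs : s ≠ 0 := (χ.val_isUnit _).ne_zero
  have hs' : ‖s‖ < 1 :=
    (pow_lt_one_iff_of_nonneg (norm_nonneg s) (mul_ne_zero two_ne_zero n.succ_ne_zero)).mp
      (by rwa [← norm_pow, hpow])
  rw [tsum_addChar_half_sum_add_weyl_sq χ n.succ_ne_zero, hyperplaneTheta_zero hs hs',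
    tprod_one_sub_pow_pow_eq_qPochhammerInf hχ, tprod_one_sub_addChar_eq_qPochhammerInf,
    ← pow_mul, hpow, mul_div_assoc]

/-- Product formula for the `A_{N−1}` lattice theta function at the shifted
    Weyl vector `ρ̂^(N)` with components `(N+1−2i)/(2N)`, `i = 1,…,N`. -/
theorem stmt1 (N : ℕ) (hN : 1 ≤ N) (q : ℝ) (hq0 : 0 < q) (hq1 : q < 1) :
    (∑' k : {k : Fin N → ℤ // ∑ i, k i = 0},
        q ^ ((1 / 2 : ℝ) *
          ∑ i : Fin N, ((k.1 i : ℝ) + ((N : ℝ) - 1 - 2 * (i.val : ℝ)) / (2 * N)) ^ 2)) =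
      q ^ (((N : ℝ) ^ 2 - 1) / (24 * N)) *
        (∏' k : ℕ, (1 - q ^ (k + 1)) ^ N) / ∏' k : ℕ, (1 - q ^ (((k : ℝ) + 1) / N)) := by
  simpa only [WeylTheta.rpowAddChar_apply, Real.rpow_one] using stmt1_general N hN
    (WeylTheta.rpowAddChar hq0) (by simpa [WeylTheta.rpowAddChar_apply, abs_of_pos hq0] using hq1)
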